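/- Let m ≥ 4 and let e be an integer with 1 ≤ e ≤ ⌊m/2⌋ such that m/gcd(m,e) is odd, and set h = (m − gcd(m,e))/2. Then the supports of the codewords of each of the following weights k in the dual code C̄_E^⊥ form a 2-(2^m, k, λ) design with the corresponding λ: for k = 2^{m−1} + 2^{m−1−h}, λ = (2^{2h−1} + 2^{h−1})(2^{m−1} + 2^{m−1−h} − 1); for k = 2^{m−1} − 2^{m−1−h}, λ = (2^{2h−1} − 2^{h−1})(2^{m−1} − 2^{m−1−h} − 1); and for k = 2^{m−1}, λ = (2^{m−1} − 1)(2^m − 2^{2h} + 1). -/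

import Mathlib

open Polynomial Finset

/-- The polynomial `c₀ + c₁x + ⋯ + c_{n−1}x^{n−1}` associated to a vector. -/
noncomputable def codePoly {n : ℕ} (c : Fin n → ZMod 2) : Polynomial (ZMod 2) :=
  ∑ i : Fin n, Polynomial.C (c i) * Polynomial.X ^ (i : ℕ)

/-- The generator polynomial `g_E(x) = M_α(x) · M_{α^{1+2^e}}(x)`. -/
noncomputable def gE (m e : ℕ) (α : GaloisField 2 m) : Polynomial (ZMod 2) :=
  minpoly (ZMod 2) α * minpoly (ZMod 2) (α ^ (1 + 2 ^ e))

/-- The binary cyclic code `C_E` of length `2^m − 1` with generator polynomial `g_E`. -/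
def CE (m e : ℕ) (α : GaloisField 2 m) : Set (Fin (2 ^ m - 1) → ZMod 2) :=
  {c | gE m e α ∣ codePoly c}

/-- The extended code `C̄_E ⊆ F_2^{2^m}`: the first `2^m − 1` coordinates form a codeword
of `C_E` and all `2^m` coordinates sum to zero. -/
def CEbar (m e : ℕ) (α : GaloisField 2 m) : Set (Fin (2 ^ m) → ZMod 2) :=
  {c | (fun i : Fin (2 ^ m - 1) => c (Fin.castLE (Nat.sub_le _ _) i)) ∈ CE m e α ∧
       ∑ i, c i = 0}

/-- The dual of a set of vectors over a commutative ring, as a submodule. -/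
def dualCode {n : ℕ} {F : Type*} [CommRing F] (C : Set (Fin n → F)) :
    Submodule F (Fin n → F) where
  carrier := {y | ∀ c ∈ C, ∑ i, y i * c i = 0}
  add_mem' := by
    intro a b ha hb c hc
    have h1 := ha c hc
    have h2 := hb c hc
    simp only [Pi.add_apply, add_mul, Finset.sum_add_distrib, h1, h2, add_zero]
  zero_mem' := by intro c hc; simp
  smul_mem' := by
    intro r a ha c hc
    have h1 := ha c hc
    simp only [Pi.smul_apply, smul_eq_mul, mul_assoc, ← Finset.mul_sum, h1, mul_zero]



set_option linter.unusedSectionVars false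

section Gen
variable {K : Type*} [Field K] [Fintype K] [DecidableEq K] [Algebra (ZMod 2) K]

/-- The sign character of `ZMod 2`. -/
def chi (z : ZMod 2) : ℤ := if z = 0 then 1 else -1

lemma chi_add (a b : ZMod 2) : chi (a + b) = chi a * chi b := by
  revert a b; decide

lemma chi_sq (a : ZMod 2) : chi a * chi a = 1 := by
  revert a; decide

lemma chi_ne (a : ZMod 2) (h : a ≠ 0) : chi a = -1 := by
  simp [chi, h]

/-- Absolute trace. -/
noncomputable def Tr (x : K) : ZMod 2 := Algebra.trace (ZMod 2) K x

lemma Tr_add (x y : K) : Tr (x + y) = Tr x + Tr y := by simp [Tr]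

lemma Tr_zero : Tr (0 : K) = 0 := by simp [Tr]

lemma Tr_pow (e : ℕ) (x : K) : Tr (x ^ 2 ^ e) = Tr x := by
  induction e with
  | zero => simp
  | succ e ih =>
    rw [pow_succ, pow_mul, ← ih]
    have := Algebra.trace_eq_of_algEquiv
      (FiniteField.frobeniusAlgEquivOfAlgebraic (ZMod 2) K) (x ^ 2 ^ e)
    simpa [Tr] using this

lemma Tr_nondeg (a : K) (ha : ∀ b, Tr (a * b) = 0) : a = 0 := by
  have htr := (traceForm_nondegenerate (ZMod 2) K).1 a
  exact htr (fun b => by simpa [Tr, Algebra.traceForm_apply] using ha b)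

lemma K_char : CharP K 2 := charP_of_injective_algebraMap (algebraMap (ZMod 2) K).injective 2

lemma K_add_self (x : K) : x + x = 0 := by
  have : CharP K 2 := K_char
  exact CharTwo.add_self_eq_zero x

lemma K_pow_add (e : ℕ) (x y : K) : (x + y) ^ 2 ^ e = x ^ 2 ^ e + y ^ 2 ^ e := by
  have : CharP K 2 := K_char
  exact add_pow_char_pow x y 2 e

/-- An additive function with a value `1` has zero character sum. -/
lemma sum_chi_zero {s : Finset K} (g : K → ZMod 2)
    (r : K) (hr : g r ≠ 0) (hs : ∀ x, x ∈ s ↔ x + r ∈ s)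
    (hg : ∀ x ∈ s, g (x + r) = g x + g r) : ∑ x ∈ s, chi (g x) = 0 := by
  have h1 : ∑ x ∈ s, chi (g x) = ∑ x ∈ s, chi (g (x + r)) := by
    symm
    refine Finset.sum_bij (fun x _ => x + r) (fun x hx => (hs x).1 hx) ?_ ?_ ?_
    · intro a _ b _ h; exact add_right_cancel h
    · intro b hb
      refine ⟨b + r, (hs b).1 hb, ?_⟩
      rw [add_assoc, K_add_self, add_zero]
    · intros; rfl
  have h2 : ∑ x ∈ s, chi (g (x + r)) = - ∑ x ∈ s, chi (g x) := by
    rw [← Finset.sum_neg_distrib]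
    refine Finset.sum_congr rfl fun x hx => ?_
    rw [hg x hx, chi_add, chi_ne _ hr]; ring
  linarith

lemma sum_chi_tr (b : K) :
    ∑ x : K, chi (Tr (b * x)) = if b = 0 then (Fintype.card K : ℤ) else 0 := by
  split_ifs with hb
  · simp [hb, Tr_zero, chi]
  · have : ∃ r, Tr (b * r) ≠ 0 := by
      by_contra! hc; exact hb (Tr_nondeg b hc)
    obtain ⟨r, hr⟩ := this
    refine sum_chi_zero (fun x => Tr (b * x)) r hr (by simp) ?_
    intro x _; simp [mul_add, Tr_add]

lemma pow_two_bij (e : ℕ) : Function.Bijective (fun x : K => x ^ 2 ^ e) := by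
  refine Finite.injective_iff_bijective.1 ?_
  intro x y h
  have h' : x ^ 2 ^ e = y ^ 2 ^ e := h
  have : (x + y) ^ 2 ^ e = 0 := by rw [K_pow_add, h', K_add_self]
  have := eq_zero_of_pow_eq_zero this
  have h2 : x + y + y = y := by rw [this, zero_add]
  rwa [add_assoc, K_add_self, add_zero] at h2

/-- Exponent of the additive character: the quadratic function. -/
noncomputable def gq (e : ℕ) (a b x : K) : ZMod 2 := Tr (a * x ^ (1 + 2 ^ e)) + Tr (b * x)

/-- Exponential sum. -/
noncomputable def Sq (e : ℕ) (a b : K) : ℤ := ∑ x : K, chi (gq e a b x)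

lemma gq_add (e : ℕ) (a b x r : K) :
    gq e a b (x + r) = gq e a b x + gq e a b r +
      Tr ((a ^ 2 ^ e * r ^ 2 ^ (2 * e) + a * r) * x ^ 2 ^ e) := by
  have h1 : a * (x + r) ^ (1 + 2 ^ e) = a * x ^ (1 + 2 ^ e) + a * r ^ (1 + 2 ^ e) +
      a * x * r ^ 2 ^ e + a * r * x ^ 2 ^ e := by
    rw [pow_add, pow_one, K_pow_add]; ring
  have h2 : Tr (a * x * r ^ 2 ^ e) = Tr (a ^ 2 ^ e * r ^ 2 ^ (2 * e) * x ^ 2 ^ e) := by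
    rw [← Tr_pow e (a * x * r ^ 2 ^ e)]
    congr 1
    rw [mul_pow, mul_pow, ← pow_mul r, ← pow_add, ← two_mul]; ring
  unfold gq
  rw [h1, mul_add, add_mul, Tr_add, Tr_add, Tr_add, Tr_add, Tr_add, h2]; ring

/-- The radical. -/
def rad (e : ℕ) (a : K) : Finset K :=
  Finset.univ.filter fun r => a ^ 2 ^ e * r ^ 2 ^ (2 * e) + a * r = 0

lemma Sq_sq (e : ℕ) (a b : K) :
    Sq e a b ^ 2 = Fintype.card K * ∑ r ∈ rad e a, chi (gq e a b r) := by
  have h1 : Sq e a b ^ 2 = ∑ y : K, ∑ r : K, chi (gq e a b y) * chi (gq e a b (y + r)) := by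
    unfold Sq
    rw [sq, Finset.sum_mul_sum]
    refine Finset.sum_congr rfl fun y _ => ?_
    exact (Equiv.sum_comp (Equiv.addLeft y)
      (fun j => chi (gq e a b y) * chi (gq e a b j))).symm
  rw [h1, Finset.sum_comm, rad, Finset.sum_filter, Finset.mul_sum]
  refine Finset.sum_congr rfl fun r _ => ?_
  set w := a ^ 2 ^ e * r ^ 2 ^ (2 * e) + a * r with hw
  have h2 : ∀ y, chi (gq e a b y) * chi (gq e a b (y + r)) =
      chi (gq e a b r) * chi (Tr (w * y ^ 2 ^ e)) := by
    intro y
    rw [gq_add, chi_add, chi_add, ← mul_assoc, ← mul_assoc, chi_sq, one_mul]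
  simp_rw [h2]
  rw [← Finset.mul_sum]
  have h3 : ∑ y : K, chi (Tr (w * y ^ 2 ^ e)) = ∑ y : K, chi (Tr (w * y)) :=
    (pow_two_bij e).sum_comp (fun y => chi (Tr (w * y)))
  rw [h3, sum_chi_tr]
  split_ifs <;> ring

lemma rad_add (e : ℕ) (a r x : K) (hr : r ∈ rad e a) : x ∈ rad e a ↔ x + r ∈ rad e a := by
  simp only [rad, Finset.mem_filter, Finset.mem_univ, true_and] at *
  have : a ^ 2 ^ e * (x + r) ^ 2 ^ (2 * e) + a * (x + r) =
      (a ^ 2 ^ e * x ^ 2 ^ (2 * e) + a * x) + (a ^ 2 ^ e * r ^ 2 ^ (2 * e) + a * r) := by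
    rw [K_pow_add]; ring
  rw [this, hr, add_zero]

lemma Sq_sq_cases (e : ℕ) (a b : K) :
    Sq e a b = 0 ∨ Sq e a b ^ 2 = Fintype.card K * (rad e a).card := by
  by_cases h : ∃ r ∈ rad e a, gq e a b r ≠ 0
  · left
    obtain ⟨r, hr, hg⟩ := h
    have := Sq_sq e a b
    rw [sum_chi_zero (gq e a b) r hg (fun x => rad_add e a r x hr), mul_zero] at this
    · exact pow_eq_zero_iff (two_ne_zero) |>.1 this
    · intro x hx
      rw [gq_add]
      have : a ^ 2 ^ e * r ^ 2 ^ (2 * e) + a * r = 0 := by simpa [rad] using hr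
      rw [this, zero_mul, Tr_zero, add_zero]
  · right
    push Not at h
    rw [Sq_sq, Finset.sum_congr rfl (fun r hr => by rw [h r hr])]
    simp [chi]

lemma parseval (e : ℕ) (a : K) : ∑ b : K, Sq e a b ^ 2 = (Fintype.card K : ℤ) ^ 2 := by
  have h1 : ∀ b, Sq e a b ^ 2 = ∑ x : K, ∑ y : K,
      chi (Tr (a * x ^ (1 + 2 ^ e))) * chi (Tr (a * y ^ (1 + 2 ^ e))) * chi (Tr ((x + y) * b)) := by
    intro b
    unfold Sq
    rw [sq, Finset.sum_mul_sum]
    refine Finset.sum_congr rfl fun x _ => Finset.sum_congr rfl fun y _ => ?_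
    rw [gq, gq, add_mul, Tr_add, chi_add, chi_add, chi_add, mul_comm b x, mul_comm b y]; ring
  simp_rw [h1]
  rw [Finset.sum_comm]
  have h2 : ∀ x : K, ∑ b : K, ∑ y : K,
      chi (Tr (a * x ^ (1 + 2 ^ e))) * chi (Tr (a * y ^ (1 + 2 ^ e))) * chi (Tr ((x + y) * b))
      = Fintype.card K := by
    intro x
    rw [Finset.sum_comm]
    simp_rw [← Finset.mul_sum, sum_chi_tr]
    rw [Finset.sum_eq_single x]
    · rw [chi_sq, K_add_self]; simp
    · intro y _ hy
      rw [if_neg, mul_zero]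
      intro h0
      apply hy
      have : x + y + y = y := by rw [h0, zero_add]
      rw [add_assoc, K_add_self, add_zero] at this
      exact this.symm
    · simp
  simp_rw [h2]
  simp [sq]

lemma Sq_zero (e : ℕ) (b : K) : Sq e 0 b = if b = 0 then (Fintype.card K : ℤ) else 0 := by
  rw [← sum_chi_tr]; simp [Sq, gq, Tr_zero]

lemma gcd_two_mul_of_odd (m e : ℕ) (hm : 0 < m) (hodd : Odd (m / Nat.gcd m e)) :
    Nat.gcd m (2 * e) = Nat.gcd m e := by
  obtain ⟨g, m', e', hg, hc, h1, h2⟩ := Nat.exists_coprime' (m := m) (n := e)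
    (Nat.gcd_pos_of_pos_left e hm)
  have hgg : Nat.gcd m e = g := by
    rw [h1, h2, Nat.gcd_mul_right, hc, one_mul]
  have hmm : m / Nat.gcd m e = m' := by
    rw [hgg, h1]; exact Nat.mul_div_cancel _ hg
  rw [hmm] at hodd
  rw [hgg, h1, h2, ← mul_assoc, Nat.gcd_mul_right]
  have : Nat.Coprime m' (2 * e') :=
    Nat.Coprime.mul_right (Nat.coprime_two_right.2 hodd) hc
  rw [this, one_mul]

lemma coprime_pow (m e : ℕ) (hm : 0 < m) (hodd : Odd (m / Nat.gcd m e)) :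
    Nat.Coprime (2 ^ m - 1) (1 + 2 ^ e) := by
  set g := Nat.gcd (2 ^ m - 1) (1 + 2 ^ e) with hg
  have g1 : g ∣ 2 ^ m - 1 := Nat.gcd_dvd_left _ _
  have g2 : g ∣ 1 + 2 ^ e := Nat.gcd_dvd_right _ _
  have hpos : 1 ≤ 2 ^ e := Nat.one_le_two_pow
  have h1 : (2 ^ (2 * e) - 1) = (1 + 2 ^ e) * (2 ^ e - 1) := by
    zify [hpos, Nat.one_le_two_pow (n := 2 * e)]; ring
  have g3 : g ∣ 2 ^ (2 * e) - 1 := h1 ▸ Dvd.dvd.mul_right g2 _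
  have g4 := Nat.dvd_gcd g1 g3
  rw [Nat.pow_sub_one_gcd_pow_sub_one, gcd_two_mul_of_odd m e hm hodd,
    ← Nat.pow_sub_one_gcd_pow_sub_one] at g4
  have g5 : g ∣ 2 ^ e - 1 := g4.trans (Nat.gcd_dvd_right _ _)
  have g6 : g ∣ 2 := by
    have := Nat.dvd_sub g2 g5
    rwa [show 1 + 2 ^ e - (2 ^ e - 1) = 2 by omega] at this
  rcases (Nat.dvd_prime Nat.prime_two).1 g6 with h | h
  · exact h
  · exfalso
    rw [h] at g1
    have : 2 ∣ 2 ^ m := dvd_pow_self 2 hm.ne'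
    have h3 : 1 ≤ 2 ^ m := Nat.one_le_two_pow
    omega

lemma card_fix (m n : ℕ) (hn : 0 < n) (hK : Fintype.card K = 2 ^ m) :
    (Finset.univ.filter fun s : K => s ^ 2 ^ n = s).card = 2 ^ Nat.gcd m n := by
  have h2n : 2 ≤ 2 ^ n := by
    calc 2 = 2 ^ 1 := rfl
      _ ≤ 2 ^ n := Nat.pow_le_pow_right (by norm_num) hn
  have h1 : (Finset.univ.filter fun s : K => s ^ 2 ^ n = s) =
      insert 0 ((Finset.univ.filter fun u : Kˣ => u ^ (2 ^ n - 1) = 1).image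
        (fun u : Kˣ => (u : K))) := by
    ext s
    simp only [Finset.mem_filter, Finset.mem_univ, true_and, Finset.mem_insert, Finset.mem_image]
    have key : s ^ 2 ^ n = s ^ (2 ^ n - 1) * s := by
      rw [← pow_succ, Nat.sub_add_cancel (by omega)]
    constructor
    · intro h
      by_cases hs : s = 0
      · exact Or.inl hs
      · right
        refine ⟨Units.mk0 s hs, ?_, rfl⟩
        ext
        rw [key] at h
        simpa using mul_right_cancel₀ hs (h.trans (one_mul s).symm)
    · rintro (h | ⟨u, hu, rfl⟩)
      · rw [h]; exact zero_pow (by omega)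
      · rw [key, ← Units.val_pow_eq_pow_val, hu]; simp
  rw [h1, Finset.card_insert_of_notMem (by simp), Finset.card_image_of_injective _ Units.val_injective]
  have h2 := IsCyclic.card_powMonoidHom_ker (G := Kˣ) (2 ^ n - 1)
  have h3 : Nat.card (powMonoidHom (2 ^ n - 1) : Kˣ →* Kˣ).ker =
      (Finset.univ.filter fun u : Kˣ => u ^ (2 ^ n - 1) = 1).card := by
    rw [← Fintype.card_subtype, ← Nat.card_eq_fintype_card]
    exact Nat.card_congr (Equiv.refl _)
  rw [← h3, h2, Nat.card_eq_fintype_card, Fintype.card_units, hK, Nat.pow_sub_one_gcd_pow_sub_one]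
  exact Nat.sub_add_cancel Nat.one_le_two_pow

lemma rad_card (m e : ℕ) (hm : 0 < m) (he : 0 < e) (hodd : Odd (m / Nat.gcd m e))
    (hK : Fintype.card K = 2 ^ m) (a : K) (ha : a ≠ 0) :
    (rad e a).card = 2 ^ Nat.gcd m e := by
  rw [← gcd_two_mul_of_odd m e hm hodd, ← card_fix (K := K) m (2 * e) (by omega) hK]
  have hc : (Nat.card Kˣ).Coprime (1 + 2 ^ e) := by
    rw [Nat.card_eq_fintype_card, Fintype.card_units, hK]; exact coprime_pow m e hm hodd
  obtain ⟨u, hu⟩ := (powCoprime hc).surjective (Units.mk0 a ha)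
  have hu' : (u : K) ^ (1 + 2 ^ e) = a := by
    have := congrArg (fun x : Kˣ => (x : K)) hu
    simpa using this
  have hu0 : (u : K) ≠ 0 := u.ne_zero
  have key : ∀ s : K, a ^ 2 ^ e * (s * (u : K)⁻¹) ^ 2 ^ (2 * e) + a * (s * (u : K)⁻¹) =
      (u : K) ^ 2 ^ e * (s ^ 2 ^ (2 * e) + s) := by
    intro s
    have e1 : (2 : ℕ) ^ (2 * e) = 2 ^ e * 2 ^ e := by rw [two_mul, pow_add]
    have e2 : (u : K) ^ ((1 + 2 ^ e) * 2 ^ e) = (u : K) ^ 2 ^ e * (u : K) ^ 2 ^ (2 * e) := by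
      rw [← pow_add, e1]; congr 1; ring
    rw [← hu', ← pow_mul, e2, mul_pow, inv_pow, pow_add, pow_one]
    field_simp
  symm
  refine Finset.card_bij (fun s _ => s * (u : K)⁻¹) ?_ ?_ ?_
  · intro s hs
    simp only [rad, Finset.mem_filter, Finset.mem_univ, true_and] at *
    rw [key, hs, K_add_self, mul_zero]
  · intro s _ t _ h
    exact mul_right_cancel₀ (inv_ne_zero hu0) h
  · intro r hr
    simp only [rad, Finset.mem_filter, Finset.mem_univ, true_and] at *
    have hr2 : r = (r * u) * (u : K)⁻¹ := by field_simp
    refine ⟨r * u, ?_, hr2.symm⟩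
    rw [hr2, key] at hr
    have h0 := (mul_eq_zero.1 hr).resolve_left (pow_ne_zero _ hu0)
    have : (r * (u : K)) ^ 2 ^ (2 * e) + r * u + r * u = r * u := by rw [h0, zero_add]
    rwa [add_assoc, K_add_self, add_zero] at this

/-- The codeword attached to a triple. -/
noncomputable def cw (e : ℕ) (p : K × K × ZMod 2) : K → ZMod 2 :=
  fun x => gq e p.1 p.2.1 x + p.2.2

lemma sum_chi_eq (f : K → ZMod 2) :
    ∑ x, chi (f x) = (Fintype.card K : ℤ) - 2 * hammingNorm f := by
  have : ∀ x, chi (f x) = 1 - 2 * (if f x ≠ 0 then 1 else 0) := by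
    intro x; unfold chi; by_cases h : f x = 0 <;> simp [h]
  simp_rw [this]
  rw [Finset.sum_sub_distrib, ← Finset.mul_sum, hammingNorm, Finset.card_filter]
  simp

lemma wt_cw (e : ℕ) (p : K × K × ZMod 2) :
    chi p.2.2 * Sq e p.1 p.2.1 = (Fintype.card K : ℤ) - 2 * hammingNorm (cw e p) := by
  rw [← sum_chi_eq, Sq, Finset.mul_sum]
  refine Finset.sum_congr rfl fun x _ => ?_
  rw [cw, chi_add]; ring

lemma cw_add (e : ℕ) (p r : K × K × ZMod 2) : cw e (p + r) = cw e p + cw e r := by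
  ext x
  simp only [cw, gq, Prod.fst_add, Prod.snd_add, Pi.add_apply, add_mul, Tr_add]
  ring

/-- The key spectral property. -/
def Spec (K : Type*) [Field K] [Fintype K] [DecidableEq K] [Algebra (ZMod 2) K]
    (e m h : ℕ) : Prop :=
  ∀ a b : K, a ≠ 0 → Sq e a b = 0 ∨ Sq e a b = 2 ^ (m - h) ∨ Sq e a b = - 2 ^ (m - h)

lemma spec (m e h : ℕ) (hm : 0 < m) (he : 0 < e) (hodd : Odd (m / Nat.gcd m e))
    (hh : 2 * h = m - Nat.gcd m e)
    (hK : Fintype.card K = 2 ^ m) : Spec K e m h := by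
  intro a b ha
  rcases Sq_sq_cases e a b with h0 | h0
  · exact Or.inl h0
  · right
    rw [rad_card m e hm he hodd hK a ha, hK] at h0
    have hd : Nat.gcd m e ≤ m := Nat.gcd_le_left e hm
    have : (Sq e a b) ^ 2 = (2 ^ (m - h)) ^ 2 := by
      rw [h0]; push_cast; rw [← pow_add, ← pow_mul]; congr 1; omega
    exact sq_eq_sq_iff_eq_or_eq_neg.1 this

lemma cw_inj (m e h : ℕ) (hh : 1 ≤ h) (hhm : h < m) (hK : Fintype.card K = 2 ^ m)
    (hs : Spec K e m h) : Function.Injective (cw (K := K) e) := by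
  have key : ∀ p : K × K × ZMod 2, cw e p = 0 → p = 0 := by
    rintro ⟨a, b, c⟩ hp
    have h1 := wt_cw e (a, b, c)
    rw [hp, hammingNorm_zero, hK] at h1
    have hc0 : c = 0 := by
      have := congrFun hp 0
      simpa [cw, gq, Tr_zero] using this
    subst hc0
    simp only [chi, if_true, one_mul, Nat.cast_zero, mul_zero, sub_zero] at h1
    push_cast at h1
    have hlt : (2 : ℤ) ^ (m - h) < 2 ^ m := pow_lt_pow_right₀ (by norm_num) (by omega)
    have hp1 : (0 : ℤ) < 2 ^ (m - h) := by positivity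
    have ha : a = 0 := by
      by_contra ha
      rcases hs a b ha with h2 | h2 | h2 <;> rw [h2] at h1 <;> linarith
    subst ha
    rw [Sq_zero] at h1
    have hb : b = 0 := by
      by_contra hb
      rw [if_neg hb] at h1
      linarith
    subst hb
    rfl
  intro p r hpr
  have h2 : ∀ p : K × K × ZMod 2, p + p = 0 := by
    rintro ⟨a, b, c⟩
    ext1
    · exact K_add_self a
    · ext1
      · exact K_add_self b
      · exact CharTwo.add_self_eq_zero c
  have h1 : cw e (p + r) = 0 := by
    rw [cw_add, hpr, ← cw_add, h2]; ext x; simp [cw, gq, Tr_zero]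
  have h3 := key _ h1
  have : p + r + r = r := by rw [h3, zero_add]
  rwa [add_assoc, h2, add_zero] at this

/-- Number of triples with given character sum. -/
noncomputable def cnt (K : Type*) [Field K] [Fintype K] [DecidableEq K] [Algebra (ZMod 2) K]
    (e : ℕ) (v : ℤ) : ℕ :=
  (Finset.univ.filter fun p : K × K × ZMod 2 => chi p.2.2 * Sq e p.1 p.2.1 = v).card

lemma cnt_eq (e : ℕ) (v : ℤ) : (cnt K e v : ℤ) =
    ∑ a : K, ∑ b : K, ((if Sq e a b = v then 1 else 0) + (if - Sq e a b = v then 1 else 0)) := by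
  rw [cnt, Finset.card_filter, Fintype.sum_prod_type]
  push_cast
  refine Finset.sum_congr rfl fun a _ => ?_
  rw [Fintype.sum_prod_type]
  refine Finset.sum_congr rfl fun b _ => ?_
  have : ∀ f : ZMod 2 → ℤ, ∑ c, f c = f 0 + f 1 := fun f => Fin.sum_univ_two f
  rw [this]
  simp [chi]

lemma inner_cnt (m e h : ℕ) (hh : 1 ≤ h) (hhm : h < m) (hK : Fintype.card K = 2 ^ m)
    (hs : Spec K e m h) (v : ℤ) (hv : v = 2 ^ (m - h) ∨ v = - 2 ^ (m - h)) (a : K) (ha : a ≠ 0) :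
    ∑ b : K, ((if Sq e a b = v then 1 else 0) + (if - Sq e a b = v then 1 else 0))
      = (2 : ℤ) ^ (2 * h) := by
  have hp1 : (0 : ℤ) < 2 ^ (m - h) := by positivity
  set M : ℤ := 2 ^ (m - h) with hM
  have h1 : ∀ b, M ^ 2 * (((if Sq e a b = v then 1 else 0) + (if - Sq e a b = v then 1 else 0)))
      = Sq e a b ^ 2 := by
    intro b
    have hne : M ≠ 0 := hp1.ne'
    have hne2 : M ≠ -M := by linarith
    have hne3 : -M ≠ M := by linarith
    rcases hs a b ha with h2 | h2 | h2 <;> rcases hv with h3 | h3 <;> rw [h2, h3] <;>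
      simp [← hM, hne, hne2, hne3, hne.symm]
  have h2 := parseval e a
  simp_rw [← h1] at h2
  rw [← Finset.mul_sum, hK] at h2
  have h4 : ((2 ^ m : ℕ) : ℤ) ^ 2 = M ^ 2 * 2 ^ (2 * h) := by
    rw [hM]; push_cast; rw [← pow_mul, ← pow_mul, ← pow_add]; congr 1; omega
  rw [h4] at h2
  exact mul_left_cancel₀ (by positivity) h2

lemma cnt_pm (m e h : ℕ) (hh : 1 ≤ h) (hhm : h < m) (hK : Fintype.card K = 2 ^ m)
    (hs : Spec K e m h) (v : ℤ) (hv : v = 2 ^ (m - h) ∨ v = - 2 ^ (m - h)) :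
    (cnt K e v : ℤ) = (2 ^ m - 1) * 2 ^ (2 * h) := by
  rw [cnt_eq, ← Finset.add_sum_erase _ _ (Finset.mem_univ (0 : K))]
  rw [Finset.sum_congr rfl (g := fun _ => (2 : ℤ) ^ (2 * h))
    (fun a ha => inner_cnt m e h hh hhm hK hs v hv a (Finset.ne_of_mem_erase ha))]
  rw [Finset.sum_const, Finset.card_erase_of_mem (Finset.mem_univ _), Finset.card_univ, hK]
  rw [Finset.sum_eq_zero]
  · simp
  · intro b _
    have hlt : (2 : ℤ) ^ (m - h) < 2 ^ m := pow_lt_pow_right₀ (by norm_num) (by omega)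
    have hp1 : (0 : ℤ) < 2 ^ (m - h) := by positivity
    rw [Sq_zero, hK]
    push_cast
    rw [if_neg, if_neg]
    · rfl
    · split_ifs <;> rcases hv with h3 | h3 <;> rw [h3] <;> intro h4 <;> linarith
    · split_ifs <;> rcases hv with h3 | h3 <;> rw [h3] <;> intro h4 <;> linarith

lemma cnt_zero (m e h : ℕ) (hh : 1 ≤ h) (hhm : h < m) (hK : Fintype.card K = 2 ^ m)
    (hs : Spec K e m h) :
    (cnt K e 0 : ℤ) = 2 * (2 ^ m - 1) * (2 ^ m + 1 - 2 ^ (2 * h)) := by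
  have hp1 : (0 : ℤ) < 2 ^ (m - h) := by positivity
  have hin : ∀ a : K, a ≠ 0 →
      ∑ b : K, ((if Sq e a b = 0 then 1 else 0) + (if - Sq e a b = 0 then 1 else 0))
        = (2 : ℤ) * (2 ^ m - 2 ^ (2 * h)) := by
    intro a ha
    have h1 := inner_cnt m e h hh hhm hK hs _ (Or.inl rfl) a ha
    set M : ℤ := 2 ^ (m - h) with hM
    have h2 : ∀ b, (((if Sq e a b = 0 then 1 else 0) + (if - Sq e a b = 0 then 1 else 0)) : ℤ)
      = 2 - 2 * ((if Sq e a b = M then 1 else 0) + (if - Sq e a b = M then 1 else 0)) := by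
      intro b
      have hne : M ≠ 0 := hp1.ne'
      have hne2 : M ≠ -M := by linarith
      have hne3 : -M ≠ M := by linarith
      rcases hs a b ha with h2 | h2 | h2 <;> rw [h2] <;>
        simp [← hM, hne, hne2, hne3, hne.symm]
    simp_rw [h2]
    rw [Finset.sum_sub_distrib, ← Finset.mul_sum, h1]
    simp [hK]; ring
  rw [cnt_eq, ← Finset.add_sum_erase _ _ (Finset.mem_univ (0 : K))]
  rw [Finset.sum_congr rfl (g := fun _ => (2 : ℤ) * (2 ^ m - 2 ^ (2 * h)))
    (fun a ha => hin a (Finset.ne_of_mem_erase ha))]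
  rw [Finset.sum_const, Finset.card_erase_of_mem (Finset.mem_univ _), Finset.card_univ, hK]
  have h0 : ∑ b : K, (((if Sq e 0 b = 0 then 1 else 0) + (if - Sq e 0 b = 0 then 1 else 0)) : ℤ)
      = 2 * (2 ^ m - 1) := by
    rw [← Finset.add_sum_erase _ _ (Finset.mem_univ (0 : K))]
    rw [Finset.sum_congr rfl (g := fun _ => (2 : ℤ))]
    · rw [Finset.sum_const, Finset.card_erase_of_mem (Finset.mem_univ _), Finset.card_univ, hK]
      rw [Sq_zero]
      simp [hK]; ring
    · intro b hb
      rw [Sq_zero, if_neg (Finset.ne_of_mem_erase hb)]; simp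
  rw [h0]
  simp
  ring

lemma cw_affine (e : ℕ) (p : K × K × ZMod 2) (u v : K) :
    ∃ p', (fun x => cw e p (u * x + v)) = cw e p' := by
  obtain ⟨a, b, c⟩ := p
  obtain ⟨w, hw⟩ := (pow_two_bij (K := K) e).surjective
    ((a ^ 2 ^ e * v ^ 2 ^ (2 * e) + a * v) * u ^ 2 ^ e)
  have hw : w ^ 2 ^ e = (a ^ 2 ^ e * v ^ 2 ^ (2 * e) + a * v) * u ^ 2 ^ e := hw
  refine ⟨(a * u ^ (1 + 2 ^ e), b * u + w, gq e a b v + c), ?_⟩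
  ext x
  simp only [cw]
  rw [gq_add, mul_pow u x (2 ^ e), ← mul_assoc, ← hw, ← mul_pow, Tr_pow]
  simp only [gq]
  rw [mul_pow u x, ← mul_assoc, add_mul, Tr_add, mul_assoc b u x]
  ring

/-- Codewords of weight `k`. -/
noncomputable def Dk (K : Type*) [Field K] [Fintype K] [DecidableEq K] [Algebra (ZMod 2) K]
    (e k : ℕ) : Finset (K → ZMod 2) :=
  (Finset.univ.image (cw (K := K) e)).filter fun f => hammingNorm f = k

/-- Codewords of weight `k` through two points. -/
noncomputable def Dst (e k : ℕ) (s t : K) : Finset (K → ZMod 2) :=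
  (Dk K e k).filter fun f => f s ≠ 0 ∧ f t ≠ 0

lemma Dst_le (e k : ℕ) (s t s' t' : K) (h : s ≠ t) (h' : s' ≠ t') :
    (Dst e k s' t').card ≤ (Dst e k s t).card := by
  have hst : s - t ≠ 0 := sub_ne_zero.2 h
  have hst' : s' - t' ≠ 0 := sub_ne_zero.2 h'
  set u := (s' - t') / (s - t) with hu
  have hu0 : u ≠ 0 := div_ne_zero hst' hst
  set v := s' - u * s with hv
  have e1 : u * s + v = s' := by rw [hv]; ring
  have e2 : u * t + v = t' := by
    rw [hv]
    have : u * (s - t) = s' - t' := by rw [hu]; field_simp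
    linear_combination -this
  have hbij : Function.Bijective (fun x : K => u * x + v) := by
    refine Finite.injective_iff_bijective.1 ?_
    intro x y hxy
    exact mul_left_cancel₀ hu0 (add_right_cancel hxy)
  refine Finset.card_le_card_of_injOn (fun f x => f (u * x + v)) ?_ ?_
  · intro f hf
    simp only [Dst, Dk, Finset.coe_filter, Finset.mem_filter, Finset.mem_image, Finset.mem_univ,
      true_and, Set.mem_ofPred_eq] at hf ⊢
    obtain ⟨⟨⟨p, rfl⟩, h2⟩, h3, h4⟩ := hf
    refine ⟨⟨?_, ?_⟩, ?_, ?_⟩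
    · obtain ⟨p', hp'⟩ := cw_affine e p u v
      exact ⟨p', hp'.symm⟩
    · rw [← h2]
      have a1 := sum_chi_eq (cw e p)
      have a2 := sum_chi_eq (fun x => cw e p (u * x + v))
      have a3 := hbij.sum_comp (fun x => chi (cw e p x))
      rw [a1] at a3
      rw [a3] at a2
      have : (hammingNorm (fun x => cw e p (u * x + v)) : ℤ) = hammingNorm (cw e p) := by linarith
      exact_mod_cast this
    · rwa [e1]
    · rwa [e2]
  · intro f _ g _ hfg
    ext y
    obtain ⟨x, hx⟩ := hbij.surjective y
    have := congrFun hfg x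
    simp only at this hx
    rwa [hx] at this

lemma double_count (e k : ℕ) (s t : K) (h : s ≠ t) :
    (Dst e k s t).card * (Fintype.card K * Fintype.card K - Fintype.card K) =
      (Dk K e k).card * (k * k - k) := by
  have h1 : ∑ q ∈ (Finset.univ : Finset K).offDiag, (Dst e k q.1 q.2).card =
      (Dst e k s t).card * (Fintype.card K * Fintype.card K - Fintype.card K) := by
    rw [Finset.sum_congr rfl (g := fun _ => (Dst e k s t).card)]
    · rw [Finset.sum_const, Finset.offDiag_card, Finset.card_univ, smul_eq_mul, mul_comm]
    · intro q hq
      have hq' : q.1 ≠ q.2 := by simpa using hq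
      exact le_antisymm (Dst_le e k _ _ _ _ h hq') (Dst_le e k _ _ _ _ hq' h)
  have h2 : ∑ q ∈ (Finset.univ : Finset K).offDiag, (Dst e k q.1 q.2).card =
      (Dk K e k).card * (k * k - k) := by
    simp_rw [Dst, Finset.card_filter]
    rw [Finset.sum_comm, Finset.sum_congr rfl (g := fun _ => k * k - k)]
    · rw [Finset.sum_const, smul_eq_mul]
    · intro f hf
      have hk : hammingNorm f = k := (Finset.mem_filter.1 hf).2
      rw [← Finset.card_filter, ← hk, hammingNorm, ← Finset.offDiag_card]
      congr 1
      ext q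
      simp
      tauto
  rw [← h1, h2]

lemma Dk_card (e k : ℕ) (v : ℤ) (hv : (Fintype.card K : ℤ) - 2 * k = v)
    (hinj : Function.Injective (cw (K := K) e)) : (Dk K e k).card = cnt K e v := by
  rw [Dk, Finset.filter_image, Finset.card_image_of_injective _ hinj, cnt]
  congr 1
  ext p
  simp only [Finset.mem_filter, Finset.mem_univ, true_and]
  rw [wt_cw, ← hv]
  omega

lemma count_final (m e k : ℕ) (v A : ℤ) (hK : Fintype.card K = 2 ^ m) (hm : 1 ≤ m) (hk : 1 ≤ k)
    (hv : (2 ^ m : ℤ) - 2 * k = v)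
    (hinj : Function.Injective (cw (K := K) e)) (hA : (cnt K e v : ℤ) = (2 ^ m - 1) * A)
    (s t : K) (h : s ≠ t) :
    ((Dst e k s t).card : ℤ) * 2 ^ m = A * k * (k - 1) := by
  have h1 := double_count e k s t h
  rw [Dk_card e k v (by rw [hK]; push_cast; exact hv) hinj, hK] at h1
  zify [Nat.le_mul_self] at h1
  rw [hA] at h1
  have h2 : (2 ^ m - 1 : ℤ) ≠ 0 := by
    have : (2 : ℤ) ^ 1 ≤ 2 ^ m := pow_le_pow_right₀ (by norm_num) hm
    linarith
  refine mul_left_cancel₀ h2 ?_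
  linear_combination h1

lemma dual_rep (φ : K →ₗ[ZMod 2] ZMod 2) : ∃ a : K, ∀ x, φ x = Tr (a * x) := by
  let T := LinearMap.BilinForm.toDual (Algebra.traceForm (ZMod 2) K)
    (traceForm_nondegenerate (ZMod 2) K)
  refine ⟨T.symm φ, fun x => ?_⟩
  have : T (T.symm φ) x = φ x := by rw [LinearEquiv.apply_symm_apply]
  rw [← this, LinearMap.BilinForm.toDual_def, Algebra.traceForm_apply]
  rfl

lemma dual_iff (e N : ℕ) (σ : Fin N → K) (y : Fin N → ZMod 2) :
    (∀ c : Fin N → ZMod 2, (∑ i, c i • σ i = 0 ∧ ∑ i, c i • σ i ^ (1 + 2 ^ e) = 0 ∧ ∑ i, c i = 0) →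
      ∑ i, y i * c i = 0) ↔ ∃ p, ∀ i, y i = cw e p (σ i) := by
  constructor
  · intro hy
    let v : Fin N → K × K × ZMod 2 := fun i => (σ i ^ (1 + 2 ^ e), σ i, 1)
    let H := Fintype.linearCombination (ZMod 2) v
    let Φ : Module.Dual (ZMod 2) (Fin N → ZMod 2) := Fintype.linearCombination (ZMod 2) y
    have hΦ : Φ ∈ (LinearMap.ker H).dualAnnihilator := by
      rw [Submodule.mem_dualAnnihilator]
      intro c hc
      have hc' : ∑ i, c i • v i = 0 := by
        simpa [H, Fintype.linearCombination_apply] using hc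
      have c1 := congrArg Prod.fst hc'
      have c2 := congrArg (fun z => z.2.1) hc'
      have c3 := congrArg (fun z => z.2.2) hc'
      simp only [Prod.fst_sum, Prod.snd_sum, v, Prod.smul_fst, Prod.smul_snd, Prod.fst_zero,
        Prod.snd_zero, smul_eq_mul, mul_one] at c1 c2 c3
      have := hy c ⟨c2, c1, c3⟩
      simp only [Φ, Fintype.linearCombination_apply, smul_eq_mul]
      rw [← this]
      exact Finset.sum_congr rfl fun i _ => mul_comm _ _
    rw [← LinearMap.range_dualMap_eq_dualAnnihilator_ker] at hΦ
    obtain ⟨ψ, hψ⟩ := hΦ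
    obtain ⟨a, ha⟩ := dual_rep (ψ ∘ₗ LinearMap.inl (ZMod 2) K (K × ZMod 2))
    obtain ⟨b, hb⟩ := dual_rep
      (ψ ∘ₗ LinearMap.inr (ZMod 2) K (K × ZMod 2) ∘ₗ LinearMap.inl (ZMod 2) K (ZMod 2))
    refine ⟨(a, b, ψ (0, 0, 1)), fun i => ?_⟩
    have h1 := LinearMap.congr_fun hψ (Pi.single i 1)
    have h2 : ψ (v i) = y i := by
      simpa [H, Φ, Fintype.linearCombination_apply_single] using h1
    have h3 : v i = (σ i ^ (1 + 2 ^ e), 0, 0) + (0, σ i, 0) + (0, 0, 1) := by simp [v]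
    rw [← h2, h3, map_add, map_add]
    have ha' := ha (σ i ^ (1 + 2 ^ e))
    have hb' := hb (σ i)
    simp only [LinearMap.comp_apply, LinearMap.inl_apply, LinearMap.inr_apply] at ha' hb'
    simp only [cw, gq]
    rw [← ha', ← hb']
    rfl
  · rintro ⟨⟨a, b, d⟩, hp⟩ c ⟨c1, c2, c3⟩
    have e1 : ∀ (w : K) (x : Fin N → K), ∑ i, c i • x i = 0 → ∑ i, Tr (w * x i) * c i = 0 := by
      intro w x hx
      have : Tr (w * ∑ i, c i • x i) = ∑ i, Tr (w * x i) * c i := by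
        unfold Tr
        rw [Finset.mul_sum, map_sum]
        refine Finset.sum_congr rfl fun i _ => ?_
        rw [mul_smul_comm, map_smul, smul_eq_mul, mul_comm]
      rw [← this, hx, mul_zero, Tr_zero]
    simp_rw [hp, cw, gq, add_mul, Finset.sum_add_distrib]
    rw [e1 a _ c2, e1 b _ c1, ← Finset.mul_sum, c3]; simp
end Gen

lemma sum_castLE {A : Type*} [AddCommMonoid A] (n N : ℕ) (hN : N = n + 1) (hle : n ≤ N)
    (g : Fin N → A) :
    ∑ i, g i = ∑ i : Fin n, g (Fin.castLE hle i) + g ⟨n, by omega⟩ := by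
  subst hN
  rw [Fin.sum_univ_castSucc]
  rfl

/-- Labelling of coordinates by field elements. -/
noncomputable def lab (m : ℕ) (α : GaloisField 2 m) (i : Fin (2 ^ m)) : GaloisField 2 m :=
  if (i : ℕ) < 2 ^ m - 1 then α ^ (i : ℕ) else 0

lemma exists_pow (m : ℕ) (hm : m ≠ 0) (α : GaloisField 2 m) (hα : orderOf α = 2 ^ m - 1)
    (x : GaloisField 2 m) (hx : x ≠ 0) : ∃ k < 2 ^ m - 1, α ^ k = x := by
  classical
  have : Fintype (GaloisField 2 m) := Fintype.ofFinite _
  have hc : Fintype.card (GaloisField 2 m) = 2 ^ m := by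
    rw [← Nat.card_eq_fintype_card, GaloisField.card 2 m hm]
  have hα0 : α ≠ 0 := by
    rintro rfl
    have h2 : 2 ^ 1 ≤ 2 ^ m := Nat.pow_le_pow_right (by norm_num) (by omega)
    have h1 : (0 : GaloisField 2 m) ^ (2 ^ m - 1) = 1 := hα ▸ pow_orderOf_eq_one _
    rw [zero_pow (by omega)] at h1
    exact zero_ne_one h1
  have hsub : (Finset.range (2 ^ m - 1)).image (fun k => α ^ k) =
      Finset.univ.erase (0 : GaloisField 2 m) := by
    refine Finset.eq_of_subset_of_card_le ?_ ?_
    · intro y hy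
      obtain ⟨k, _, rfl⟩ := Finset.mem_image.1 hy
      simp [hα0]
    · rw [Finset.card_erase_of_mem (Finset.mem_univ _), Finset.card_univ, hc,
        Finset.card_image_of_injOn, Finset.card_range]
      have := pow_injOn_Iio_orderOf (x := α)
      rw [hα] at this
      simpa [Set.InjOn] using this
  have : x ∈ Finset.univ.erase (0 : GaloisField 2 m) := by simp [hx]
  rw [← hsub] at this
  obtain ⟨k, hk, h⟩ := Finset.mem_image.1 this
  exact ⟨k, Finset.mem_range.1 hk, h⟩

lemma lab_bij (m : ℕ) (hm : m ≠ 0) (α : GaloisField 2 m) (hα : orderOf α = 2 ^ m - 1) :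
    Function.Bijective (lab m α) := by
  classical
  have : Fintype (GaloisField 2 m) := Fintype.ofFinite _
  have hc : Fintype.card (GaloisField 2 m) = 2 ^ m := by
    rw [← Nat.card_eq_fintype_card, GaloisField.card 2 m hm]
  rw [Fintype.bijective_iff_surjective_and_card]
  refine ⟨fun x => ?_, by simp [hc]⟩
  have h1 : 1 ≤ 2 ^ m := Nat.one_le_two_pow
  by_cases hx : x = 0
  · exact ⟨⟨2 ^ m - 1, by omega⟩, by simp [lab, hx]⟩
  · obtain ⟨k, hk, h⟩ := exists_pow m hm α hα x hx
    exact ⟨⟨k, by omega⟩, by simp [lab, hk, h]⟩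

lemma gE_dvd (m e : ℕ) (hm : 4 ≤ m) (he1 : 1 ≤ e) (heM : 2 * e ≤ m)
    (α : GaloisField 2 m) (hα : orderOf α = 2 ^ m - 1) (P : Polynomial (ZMod 2)) :
    gE m e α ∣ P ↔ aeval α P = 0 ∧ aeval (α ^ (1 + 2 ^ e)) P = 0 := by
  classical
  have : Fintype (GaloisField 2 m) := Fintype.ofFinite _
  have hint : ∀ x : GaloisField 2 m, IsIntegral (ZMod 2) x := fun x => IsIntegral.of_finite _ _
  have hne : minpoly (ZMod 2) α ≠ minpoly (ZMod 2) (α ^ (1 + 2 ^ e)) := by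
    intro h
    have h1 : IsConjRoot (ZMod 2) (α ^ (1 + 2 ^ e)) α := h.symm
    obtain ⟨σ, hσ⟩ := isConjRoot_iff_exists_algEquiv.1 h1
    have h2 : ∀ x, σ x = x ^ (1 + 2 ^ e) := by
      intro x
      by_cases hx : x = 0
      · simp [hx]
      · obtain ⟨k, _, rfl⟩ := exists_pow m (by omega) α hα x hx
        rw [map_pow, hσ, ← pow_mul, ← pow_mul, mul_comm]
    have h3 : σ (1 + α) = 1 + σ α := by simp
    rw [h2, h2, pow_add, pow_one, K_pow_add, one_pow, pow_add, pow_one] at h3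
    have h4 : α ^ 2 ^ e = - α := by linear_combination h3
    have h5 : α ^ 2 ^ e = α := by
      rw [h4]; exact neg_eq_of_add_eq_zero_left (K_add_self α)
    have hα0 : α ≠ 0 := by
      rintro rfl
      have h2 : 2 ^ 1 ≤ 2 ^ m := Nat.pow_le_pow_right (by norm_num) (by omega)
      have h1 : (0 : GaloisField 2 m) ^ (2 ^ m - 1) = 1 := hα ▸ pow_orderOf_eq_one _
      rw [zero_pow (by omega)] at h1
      exact zero_ne_one h1
    have h2e : 2 ^ 1 ≤ 2 ^ e := Nat.pow_le_pow_right (by norm_num) he1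
    have h6 : α ^ (2 ^ e - 1) = 1 := by
      have : α ^ (2 ^ e - 1) * α = 1 * α := by
        rw [← pow_succ, Nat.sub_add_cancel (by omega), h5, one_mul]
      exact mul_right_cancel₀ hα0 this
    have h7 := orderOf_dvd_of_pow_eq_one h6
    rw [hα] at h7
    have h8 := Nat.le_of_dvd (by omega) h7
    have h9 : 2 ^ e < 2 ^ m := Nat.pow_lt_pow_right (by norm_num) (by omega)
    omega
  have hcop : IsCoprime (minpoly (ZMod 2) α) (minpoly (ZMod 2) (α ^ (1 + 2 ^ e))) := by
    rw [(minpoly.irreducible (hint α)).coprime_iff_not_dvd]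
    intro hd
    have hass := (minpoly.irreducible (hint α)).associated_of_dvd
      (minpoly.irreducible (hint (α ^ (1 + 2 ^ e)))) hd
    exact hne (eq_of_monic_of_associated (minpoly.monic (hint _)) (minpoly.monic (hint _)) hass)
  rw [gE, ← minpoly.dvd_iff, ← minpoly.dvd_iff]
  exact ⟨fun h => ⟨(dvd_mul_right _ _).trans h, (dvd_mul_left _ _).trans h⟩,
    fun h => hcop.mul_dvd h.1 h.2⟩

lemma mem_CEbar (m e : ℕ) (hm : 4 ≤ m) (he1 : 1 ≤ e) (heM : 2 * e ≤ m)
    (α : GaloisField 2 m) (hα : orderOf α = 2 ^ m - 1) (c : Fin (2 ^ m) → ZMod 2) :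
    c ∈ CEbar m e α ↔ (∑ i, c i • lab m α i = 0 ∧ ∑ i, c i • lab m α i ^ (1 + 2 ^ e) = 0 ∧
      ∑ i, c i = 0) := by
  have hN : 2 ^ m = (2 ^ m - 1) + 1 := (Nat.sub_add_cancel Nat.one_le_two_pow).symm
  have hev : ∀ (x : GaloisField 2 m) (c' : Fin (2 ^ m - 1) → ZMod 2),
      aeval x (codePoly c') = ∑ i, c' i • x ^ (i : ℕ) := by
    intro x c'
    simp [codePoly, map_sum, Algebra.smul_def]
  have h1 : ∑ i, c i • lab m α i =
      ∑ i : Fin (2 ^ m - 1), c (Fin.castLE (Nat.sub_le _ _) i) • α ^ (i : ℕ) := by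
    rw [sum_castLE (2 ^ m - 1) (2 ^ m) hN (Nat.sub_le _ _)]
    simp [lab]
  have h2 : ∑ i, c i • lab m α i ^ (1 + 2 ^ e) =
      ∑ i : Fin (2 ^ m - 1), c (Fin.castLE (Nat.sub_le _ _) i) • (α ^ (1 + 2 ^ e)) ^ (i : ℕ) := by
    rw [sum_castLE (2 ^ m - 1) (2 ^ m) hN (Nat.sub_le _ _)]
    simp [lab, ← pow_mul, mul_comm]
  rw [h1, h2, ← hev, ← hev]
  simp only [CEbar, CE, Set.mem_ofPred_eq]
  rw [gE_dvd m e hm he1 heM α hα, and_assoc]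

lemma ncard_eq (m e k : ℕ) (hm : 4 ≤ m) (he1 : 1 ≤ e) (heM : 2 * e ≤ m)
    [Fintype (GaloisField 2 m)] [DecidableEq (GaloisField 2 m)]
    (α : GaloisField 2 m) (hα : orderOf α = 2 ^ m - 1) (T : Finset (Fin (2 ^ m)))
    (hT : T.card = 2) : ∃ s t : GaloisField 2 m, s ≠ t ∧
      {y : Fin (2 ^ m) → ZMod 2 | y ∈ dualCode (CEbar m e α) ∧
        hammingNorm y = k ∧ ∀ i ∈ T, y i ≠ 0}.ncard = (Dst e k s t).card := by
  obtain ⟨i, j, hij, rfl⟩ := Finset.card_eq_two.1 hT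
  have hb := lab_bij m (by omega) α hα
  refine ⟨lab m α i, lab m α j, fun h => hij (hb.injective h), ?_⟩
  have hmem : ∀ y, y ∈ dualCode (CEbar m e α) ↔ ∃ p, ∀ i, y i = cw e p (lab m α i) := by
    intro y
    rw [← dual_iff]
    simp_rw [← mem_CEbar m e hm he1 heM α hα]
    rfl
  have hnorm : ∀ f : GaloisField 2 m → ZMod 2,
      hammingNorm (fun i => f (lab m α i)) = hammingNorm f := by
    intro f
    simp only [hammingNorm]
    refine Finset.card_bij (fun i _ => lab m α i) ?_ ?_ ?_
    · intro a ha; simpa using ha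
    · intro a _ b _ h; exact hb.injective h
    · intro b hbb
      obtain ⟨a, rfl⟩ := hb.surjective b
      exact ⟨a, by simpa using hbb, rfl⟩
  have himg : {y : Fin (2 ^ m) → ZMod 2 | y ∈ dualCode (CEbar m e α) ∧
        hammingNorm y = k ∧ ∀ l ∈ ({i, j} : Finset (Fin (2 ^ m))), y l ≠ 0} =
      (fun (f : GaloisField 2 m → ZMod 2) l => f (lab m α l)) ''
        (Dst e k (lab m α i) (lab m α j) : Set (GaloisField 2 m → ZMod 2)) := by
    ext y
    simp only [Set.mem_ofPred_eq, Set.mem_image, hmem, Finset.mem_coe, Dst, Dk, Finset.mem_filter,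
      Finset.mem_image, Finset.mem_univ, true_and, Finset.mem_insert, Finset.mem_singleton,
      forall_eq_or_imp, forall_eq]
    constructor
    · rintro ⟨⟨p, hp⟩, h2, h3, h4⟩
      have hy : y = fun l => cw e p (lab m α l) := funext hp
      subst hy
      exact ⟨cw e p, ⟨⟨⟨p, rfl⟩, by rw [← h2, hnorm]⟩, h3, h4⟩, rfl⟩
    · rintro ⟨f, ⟨⟨⟨p, rfl⟩, h2⟩, h3, h4⟩, rfl⟩
      exact ⟨⟨p, fun _ => rfl⟩, by rw [hnorm, h2], h3, h4⟩
  rw [himg, Set.ncard_image_of_injective, Set.ncard_coe_finset]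
  intro f g hfg
  ext x
  obtain ⟨l, rfl⟩ := hb.surjective x
  exact congrFun hfg l

set_option maxHeartbeats 2000000

/-- Let `m ≥ 4`, `1 ≤ e ≤ ⌊m/2⌋` with `m/gcd(m,e)` odd, and
`h = (m − gcd(m,e))/2`. Then the supports of the codewords of weight
`k = 2^{m−1} + 2^{m−1−h}`, `k = 2^{m−1} − 2^{m−1−h}`, and `k = 2^{m−1}` in `C̄_E^⊥`
form `2-(2^m, k, λ)` designs with the corresponding values of `λ`. -/
theorem dual_code_designs_case_a
    (m e h : ℕ) (hm : 4 ≤ m) (he1 : 1 ≤ e) (heM : 2 * e ≤ m)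
    (hodd : Odd (m / Nat.gcd m e)) (hh : 2 * h = m - Nat.gcd m e)
    (α : GaloisField 2 m) (hα : orderOf α = 2 ^ m - 1) :
    (∀ T : Finset (Fin (2 ^ m)), T.card = 2 →
      {y : Fin (2 ^ m) → ZMod 2 | y ∈ dualCode (CEbar m e α) ∧
        hammingNorm y = 2 ^ (m - 1) + 2 ^ (m - 1 - h) ∧ ∀ i ∈ T, y i ≠ 0}.ncard =
      (2 ^ (2 * h - 1) + 2 ^ (h - 1)) * (2 ^ (m - 1) + 2 ^ (m - 1 - h) - 1)) ∧
    (∀ T : Finset (Fin (2 ^ m)), T.card = 2 →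
      {y : Fin (2 ^ m) → ZMod 2 | y ∈ dualCode (CEbar m e α) ∧
        hammingNorm y = 2 ^ (m - 1) - 2 ^ (m - 1 - h) ∧ ∀ i ∈ T, y i ≠ 0}.ncard =
      (2 ^ (2 * h - 1) - 2 ^ (h - 1)) * (2 ^ (m - 1) - 2 ^ (m - 1 - h) - 1)) ∧
    (∀ T : Finset (Fin (2 ^ m)), T.card = 2 →
      {y : Fin (2 ^ m) → ZMod 2 | y ∈ dualCode (CEbar m e α) ∧
        hammingNorm y = 2 ^ (m - 1) ∧ ∀ i ∈ T, y i ≠ 0}.ncard =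
      (2 ^ (m - 1) - 1) * (2 ^ m - 2 ^ (2 * h) + 1)) := by
  classical
  have : Fintype (GaloisField 2 m) := Fintype.ofFinite _
  have hK : Fintype.card (GaloisField 2 m) = 2 ^ m := by
    rw [← Nat.card_eq_fintype_card, GaloisField.card 2 m (by omega)]
  have hd1 : Nat.gcd m e ≤ e := Nat.gcd_le_right m (by omega)
  have hd0 : 0 < Nat.gcd m e := Nat.gcd_pos_of_pos_left e (by omega)
  have hh1 : 1 ≤ h := by omega
  have hhm : 2 * h < m := by omega
  have hs : Spec (GaloisField 2 m) e m h := spec m e h (by omega) he1 hodd hh hK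
  have hinj := cw_inj m e h hh1 (by omega) hK hs
  have cp := cnt_pm m e h hh1 (by omega) hK hs _ (Or.inl rfl)
  have cm := cnt_pm m e h hh1 (by omega) hK hs _ (Or.inr rfl)
  have c0 := cnt_zero m e h hh1 (by omega) hK hs
  have cf := fun (k : ℕ) => ncard_eq m e k hm he1 heM α hα
  have fin := fun (k : ℕ) (v A : ℤ) =>
    count_final (K := GaloisField 2 m) m e k v A hK (by omega)
  clear hodd hh hd1 hd0 hs
  obtain ⟨h', rfl⟩ : ∃ h', h = h' + 1 := ⟨h - 1, by omega⟩
  obtain ⟨r, hr⟩ : ∃ r, m = h' + r + 2 := ⟨m - h' - 2, by omega⟩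
  have hle : 2 ^ h' ≤ 2 ^ r := Nat.pow_le_pow_right (by norm_num) (by omega)
  have x1 : 1 ≤ 2 ^ h' := Nat.one_le_two_pow
  have y1 : 1 ≤ 2 ^ r := Nat.one_le_two_pow
  have q1 : 2 ^ (2 * (h' + 1) - 1) = 2 * 2 ^ h' * 2 ^ h' := by
    rw [show 2 * (h' + 1) - 1 = h' + h' + 1 by omega, pow_succ, pow_add]; ring
  have q2 : 2 ^ (h' + 1 - 1) = 2 ^ h' := by rw [Nat.add_sub_cancel]
  have q3 : 2 ^ (m - 1) = 2 * 2 ^ h' * 2 ^ r := by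
    rw [show m - 1 = h' + r + 1 by omega, pow_succ, pow_add]; ring
  have q4 : 2 ^ (m - 1 - (h' + 1)) = 2 ^ r := by congr 1; omega
  have q5 : 2 ^ m = 4 * 2 ^ h' * 2 ^ r := by
    rw [hr, pow_add, pow_add]; ring
  have q6 : 2 ^ (2 * (h' + 1)) = 4 * 2 ^ h' * 2 ^ h' := by
    rw [show 2 * (h' + 1) = h' + h' + 2 by omega, pow_add, pow_add]; ring
  have q5z : (2 : ℤ) ^ m = 4 * 2 ^ h' * 2 ^ r := by exact_mod_cast q5
  have q6z : (2 : ℤ) ^ (2 * (h' + 1)) = 4 * 2 ^ h' * 2 ^ h' := by exact_mod_cast q6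
  have q7z : (2 : ℤ) ^ (m - (h' + 1)) = 2 * 2 ^ r := by
    rw [show m - (h' + 1) = r + 1 by omega, pow_succ]; ring
  have ne : (4 * 2 ^ h' * 2 ^ r : ℤ) ≠ 0 := by positivity
  rw [q1, q2, q3, q4]
  refine ⟨?_, ?_, ?_⟩
  · intro T hT
    obtain ⟨s, t, hst, h1⟩ := cf (2 * 2 ^ h' * 2 ^ r + 2 ^ r) T hT
    rw [h1]
    have h2 := fin (2 * 2 ^ h' * 2 ^ r + 2 ^ r) _ (2 ^ (2 * (h' + 1))) (by omega)
      (by rw [q5z, q7z]; push_cast; ring) hinj cm s t hst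
    rw [q5z, q6z] at h2
    zify [show 1 ≤ 2 * 2 ^ h' * 2 ^ r + 2 ^ r by omega]
    refine mul_right_cancel₀ ne (h2.trans ?_)
    push_cast; ring
  · intro T hT
    have k1 : 2 ^ r ≤ 2 * 2 ^ h' * 2 ^ r := by nlinarith
    have k2 : 1 ≤ 2 * 2 ^ h' * 2 ^ r - 2 ^ r := by
      have : 2 ^ r + 1 ≤ 2 * 2 ^ h' * 2 ^ r := by nlinarith
      omega
    have k3 : 2 ^ h' ≤ 2 * 2 ^ h' * 2 ^ h' := by nlinarith
    obtain ⟨s, t, hst, h1⟩ := cf (2 * 2 ^ h' * 2 ^ r - 2 ^ r) T hT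
    rw [h1]
    have h2 := fin (2 * 2 ^ h' * 2 ^ r - 2 ^ r) _ (2 ^ (2 * (h' + 1))) k2
      (by rw [q5z, q7z]; push_cast [Nat.cast_sub k1]; ring) hinj cp s t hst
    rw [q5z, q6z] at h2
    zify [k1, k2, k3]
    refine mul_right_cancel₀ ne (h2.trans ?_)
    push_cast [Nat.cast_sub k1]; ring
  · intro T hT
    have k2 : 1 ≤ 2 * 2 ^ h' * 2 ^ r := by nlinarith
    have k3 : 4 * 2 ^ h' * 2 ^ h' ≤ 4 * 2 ^ h' * 2 ^ r := by nlinarith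
    obtain ⟨s, t, hst, h1⟩ := cf (2 * 2 ^ h' * 2 ^ r) T hT
    rw [h1, q5, q6]
    have h2 := fin (2 * 2 ^ h' * 2 ^ r) 0 (2 * (2 ^ m + 1 - 2 ^ (2 * (h' + 1)))) k2
      (by rw [q5z]; push_cast; ring) hinj (by rw [c0]; ring) s t hst
    rw [q5z, q6z] at h2
    zify [k2, k3]
    refine mul_right_cancel₀ ne (h2.trans ?_)
    push_cast; ring
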